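/- arXiv:1708.04579 — 3 statements merged into one kernel-verified Lean document; each statement's English description precedes it below -/
import Mathlib

section
/- (Proximity theorem) Let f : ℤⁿ → ℝ ∪ {+∞} be a globally or locally discrete midpoint convex function, let α be a positive integer, and let x^α ∈ dom f. If f(x^α) ≤ f(x^α + αd) for all d ∈ {−1, 0, +1}ⁿ, then there exists a global minimizer x* ∈ ℤⁿ of f with ‖x^α − x*‖∞ ≤ n(α − 1). -/
/-- The ℓ∞-norm of an integer vector, as a natural number. -/
def linf {n : ℕ} (z : Fin n → ℤ) : ℕ :=
  Finset.univ.sup fun i => (z i).natAbs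

/-- Componentwise round-up of (x+y)/2. -/
def avgUp {n : ℕ} (x y : Fin n → ℤ) : Fin n → ℤ :=
  fun i => ⌈((x i + y i : ℚ)) / 2⌉

/-- Componentwise round-down of (x+y)/2. -/
def avgDown {n : ℕ} (x y : Fin n → ℤ) : Fin n → ℤ :=
  fun i => ⌊((x i + y i : ℚ)) / 2⌋

/-- A set `S ⊆ ℤⁿ` is discrete midpoint convex. -/
def DMCSet {n : ℕ} (S : Set (Fin n → ℤ)) : Prop :=
  ∀ ⦃x⦄, x ∈ S → ∀ ⦃y⦄, y ∈ S → 2 ≤ linf (x - y) →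
    avgUp x y ∈ S ∧ avgDown x y ∈ S

/-- `f` satisfies discrete midpoint convexity for the pair `(x, y)`.
Values are in `ℝ ∪ {+∞}`, modeled as `WithTop ℝ`. -/
def DMCPair {n : ℕ} (f : (Fin n → ℤ) → WithTop ℝ) (x y : Fin n → ℤ) : Prop :=
  f (avgUp x y) + f (avgDown x y) ≤ f x + f y

/-- `f` is globally discrete midpoint convex. -/
def GloballyDMC {n : ℕ} (f : (Fin n → ℤ) → WithTop ℝ) : Prop :=
  ∀ x y : Fin n → ℤ, 2 ≤ linf (x - y) → DMCPair f x y

/-- The effective domain of `f`. -/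
def effDom {n : ℕ} (f : (Fin n → ℤ) → WithTop ℝ) : Set (Fin n → ℤ) :=
  {x | f x ≠ ⊤}

/-- `f` is locally discrete midpoint convex. -/
def LocallyDMC {n : ℕ} (f : (Fin n → ℤ) → WithTop ℝ) : Prop :=
  DMCSet (effDom f) ∧ ∀ x y : Fin n → ℤ, linf (x - y) = 2 → DMCPair f x y

/-- `v` has supremum norm exactly `m`, attained at some coordinate. -/
def HasNorm {n : ℕ} (m : ℤ) (v : Fin n → ℤ) : Prop :=
  (∀ i, -m ≤ v i ∧ v i ≤ m) ∧ ∃ i, v i = m ∨ v i = -m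

/-- The `j`-th of the `m` unit steps (with values in `{-1, 0, 1}`, increasing in `j`) whose sum
is `v`, for `|v| ≤ m`. -/
def unitStep (m v j : ℤ) : ℤ :=
  (if m - j ≤ v then 1 else 0) - (if v ≤ -(j + 1) then 1 else 0)

/-- The componentwise `j`-th unit step of a vector. -/
def vecStep {n : ℕ} (m : ℤ) (v : Fin n → ℤ) (j : ℤ) : Fin n → ℤ :=
  fun i => unitStep m (v i) j

theorem linf_le_iff {n : ℕ} (v : Fin n → ℤ) (m : ℕ) :
    linf v ≤ m ↔ ∀ i, (v i).natAbs ≤ m := by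
  simp [linf]

theorem linf_sub_comm {n : ℕ} (x y : Fin n → ℤ) : linf (x - y) = linf (y - x) := by
  unfold linf
  congr 1
  funext i
  simp only [Pi.sub_apply]
  omega

theorem HasNorm.linf_eq {n : ℕ} {m : ℤ} {v : Fin n → ℤ} (h : HasNorm m v) :
    (linf v : ℤ) = m := by
  obtain ⟨hb, i, hi⟩ := h
  have hle : linf v ≤ m.toNat := (linf_le_iff v _).2 fun k => by have := hb k; omega
  have hge := (linf_le_iff v _).1 le_rfl i
  have := hb i
  omega

theorem hasNorm_linf {n : ℕ} {v : Fin n → ℤ} (h : 0 < linf v) : HasNorm (linf v) v := by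
  have hb := (linf_le_iff v _).1 le_rfl
  refine ⟨fun i => by have := hb i; omega, ?_⟩
  by_contra! hcon
  have : linf v ≤ linf v - 1 := (linf_le_iff v _).2 fun i => by
    have := hb i
    have := hcon i
    omega
  omega

theorem avgUp_apply {n : ℕ} (x y : Fin n → ℤ) (i : Fin n) :
    avgUp x y i = (x i + y i + 1) / 2 := by
  unfold avgUp
  rw [Int.ceil_eq_iff]
  have h1 : 2 * ((x i + y i + 1) / 2) ≤ x i + y i + 1 := by omega
  have h2 : x i + y i ≤ 2 * ((x i + y i + 1) / 2) := by omega
  have h1' : (2 : ℚ) * (((x i + y i + 1) / 2 : ℤ) : ℚ) ≤ x i + y i + 1 := by exact_mod_cast h1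
  have h2' : (x i + y i : ℚ) ≤ 2 * (((x i + y i + 1) / 2 : ℤ) : ℚ) := by exact_mod_cast h2
  constructor <;> linarith

theorem avgDown_apply {n : ℕ} (x y : Fin n → ℤ) (i : Fin n) :
    avgDown x y i = (x i + y i) / 2 := by
  unfold avgDown
  rw [Int.floor_eq_iff]
  have h1 : 2 * ((x i + y i) / 2) ≤ x i + y i := by omega
  have h2 : x i + y i < 2 * ((x i + y i) / 2) + 2 := by omega
  have h1' : (2 : ℚ) * (((x i + y i) / 2 : ℤ) : ℚ) ≤ x i + y i := by exact_mod_cast h1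
  have h2' : (x i + y i : ℚ) < 2 * (((x i + y i) / 2 : ℤ) : ℚ) + 2 := by exact_mod_cast h2
  constructor <;> linarith

theorem unitStep_sub_of_le {m v j k : ℤ} (hv : -m ≤ v ∧ v ≤ m) (hj : 0 ≤ j) (hjk : j ≤ k)
    (hk : k + 1 < m) :
    unitStep (m - 1) (v - unitStep m v j) k = unitStep m v (k + 1) := by
  unfold unitStep
  split_ifs <;> omega

theorem unitStep_sub_of_lt {m v j k : ℤ} (hv : -m ≤ v ∧ v ≤ m) (hk : 0 ≤ k) (hkj : k < j)
    (hj : j < m) :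
    unitStep (m - 1) (v - unitStep m v j) k = unitStep m v k := by
  unfold unitStep
  split_ifs <;> omega

theorem unitStep_two_zero {m v j k : ℤ} (hv : -m ≤ v ∧ v ≤ m) (hj : 0 ≤ j) (hjk : j < k)
    (hk : k < m) :
    unitStep 2 (unitStep m v j + unitStep m v k) 0 = unitStep m v j := by
  unfold unitStep
  split_ifs <;> omega

theorem unitStep_two_one {m v j k : ℤ} (hv : -m ≤ v ∧ v ≤ m) (hj : 0 ≤ j) (hjk : j < k)
    (hk : k < m) :
    unitStep 2 (unitStep m v j + unitStep m v k) 1 = unitStep m v k := by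
  unfold unitStep
  split_ifs <;> omega

theorem unitStep_mono {m v j k : ℤ} (hjk : j ≤ k) : unitStep m v j ≤ unitStep m v k := by
  unfold unitStep
  split_ifs <;> omega

theorem unitStep_cases (m v j : ℤ) :
    unitStep m v j = -1 ∨ unitStep m v j = 0 ∨ unitStep m v j = 1 := by
  unfold unitStep
  split_ifs <;> simp

theorem unitStep_le_add_one {m v j k : ℤ} (hj : 0 ≤ j) (hk : k < m) :
    unitStep m v k ≤ unitStep m v j + 1 := by
  unfold unitStep
  split_ifs <;> omega

theorem unitStep_eq_of_extreme {m v j k : ℤ} (hv : v = m ∨ v = -m) (hj : 0 ≤ j) (hjm : j < m)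
    (hk : 0 ≤ k) (hkm : k < m) : unitStep m v k = unitStep m v j := by
  unfold unitStep
  split_ifs <;> omega

theorem HasNorm.sub_vecStep {n : ℕ} {m j : ℤ} {v : Fin n → ℤ} (h : HasNorm m v) (hj : 0 ≤ j)
    (hjm : j < m) : HasNorm (m - 1) (v - vecStep m v j) := by
  obtain ⟨hb, i, hi⟩ := h
  refine ⟨fun k => ?_, i, ?_⟩
  · have := hb k
    simp only [Pi.sub_apply, vecStep, unitStep]
    split_ifs <;> omega
  · simp only [Pi.sub_apply, vecStep, unitStep]
    split_ifs <;> omega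

theorem HasNorm.vecStep_add_vecStep {n : ℕ} {m j k : ℤ} {v : Fin n → ℤ} (h : HasNorm m v)
    (hj : 0 ≤ j) (hjm : j < m) (hk : 0 ≤ k) (hkm : k < m) :
    HasNorm 2 (vecStep m v j + vecStep m v k) := by
  obtain ⟨hb, i, hi⟩ := h
  refine ⟨fun l => ?_, i, ?_⟩
  · simp only [Pi.add_apply, vecStep, unitStep]
    split_ifs <;> omega
  · simp only [Pi.add_apply, vecStep, unitStep]
    split_ifs <;> omega

/-- Removing one unit step leaves the other unit steps in the decomposition. -/
theorem HasNorm.exists_vecStep_sub {n : ℕ} {m j k : ℤ} {v : Fin n → ℤ} (h : HasNorm m v)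
    (hj : 0 ≤ j) (hjm : j < m) (hk : 0 ≤ k) (hkm : k < m) (hjk : j ≠ k) :
    ∃ l, 0 ≤ l ∧ l < m - 1 ∧ vecStep (m - 1) (v - vecStep m v j) l = vecStep m v k := by
  rcases lt_or_gt_of_ne hjk with hlt | hlt
  · refine ⟨k - 1, by omega, by omega, funext fun i => ?_⟩
    have := unitStep_sub_of_le (k := k - 1) (h.1 i) hj (by omega) (by omega)
    simpa [vecStep] using this
  · refine ⟨k, by omega, by omega, funext fun i => ?_⟩
    exact unitStep_sub_of_lt (h.1 i) hk hlt hjm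

/-- The decomposition of a sum of two different unit steps consists of these steps. -/
theorem HasNorm.exists_vecStep_pair {n : ℕ} {m j k : ℤ} {v : Fin n → ℤ} (h : HasNorm m v)
    (hj : 0 ≤ j) (hjm : j < m) (hk : 0 ≤ k) (hkm : k < m) (hjk : j ≠ k) :
    ∃ l, 0 ≤ l ∧ l < 2 ∧ vecStep 2 (vecStep m v j + vecStep m v k) l = vecStep m v k := by
  rcases lt_or_gt_of_ne hjk with hlt | hlt
  · exact ⟨1, by omega, by omega, funext fun i => unitStep_two_one (h.1 i) hj hlt hkm⟩
  · refine ⟨0, by omega, by omega, ?_⟩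
    rw [add_comm]
    exact funext fun i => unitStep_two_zero (h.1 i) hk hlt hjm

theorem avgUp_eq_add_vecStep {n : ℕ} {x y : Fin n → ℤ} (h : HasNorm 2 (y - x)) :
    avgUp x y = x + vecStep 2 (y - x) 1 := by
  funext i
  have := h.1 i
  simp only [avgUp_apply, Pi.add_apply, Pi.sub_apply, vecStep, unitStep] at this ⊢
  split_ifs <;> omega

theorem avgDown_eq_add_vecStep {n : ℕ} {x y : Fin n → ℤ} (h : HasNorm 2 (y - x)) :
    avgDown x y = x + vecStep 2 (y - x) 0 := by
  funext i
  have := h.1 i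
  simp only [avgDown_apply, Pi.add_apply, Pi.sub_apply, vecStep, unitStep] at this ⊢
  split_ifs <;> omega

theorem add_vecStep_one {n : ℕ} {x y : Fin n → ℤ} (h : HasNorm 1 (y - x)) :
    x + vecStep 1 (y - x) 0 = y := by
  funext i
  have := h.1 i
  simp only [Pi.add_apply, Pi.sub_apply, vecStep, unitStep] at this ⊢
  split_ifs <;> omega

/-- Membership of the midpoints for a pair of given distance at least two. -/
theorem DMCSet.avg_mem {n : ℕ} {S : Set (Fin n → ℤ)} (hS : DMCSet S) {x y : Fin n → ℤ} {m : ℤ}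
    (hx : x ∈ S) (hy : y ∈ S) (h : HasNorm m (y - x)) (hm : 2 ≤ m) :
    avgUp x y ∈ S ∧ avgDown x y ∈ S := by
  refine hS hx hy ?_
  have := h.linf_eq
  rw [linf_sub_comm]
  omega

/-- `S` contains every point reached from one of its points by a unit step towards another one,
for pairs at distance less than `m`. -/
def StepClosedBelow {n : ℕ} (S : Set (Fin n → ℤ)) (m : ℤ) : Prop :=
  ∀ l, l < m → ∀ x ∈ S, ∀ y ∈ S, HasNorm l (y - x) → ∀ j, 0 ≤ j → j < l →
    x + vecStep l (y - x) j ∈ S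

theorem StepClosedBelow.of_pair {n : ℕ} {S : Set (Fin n → ℤ)} {m j k : ℤ}
    (ih : StepClosedBelow S m) (hm : 3 ≤ m) {x v : Fin n → ℤ} (hx : x ∈ S) (h : HasNorm m v)
    (hj : 0 ≤ j) (hjm : j < m) (hk : 0 ≤ k) (hkm : k < m) (hjk : j ≠ k)
    (hmem : x + (vecStep m v j + vecStep m v k) ∈ S) : x + vecStep m v k ∈ S := by
  obtain ⟨l, hl0, hl, hle⟩ := h.exists_vecStep_pair hj hjm hk hkm hjk
  have := ih 2 (by omega) x hx _ hmem
    (by simpa using h.vecStep_add_vecStep hj hjm hk hkm) l hl0 hl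
  rwa [add_sub_cancel_left, hle] at this

theorem StepClosedBelow.of_step {n : ℕ} {S : Set (Fin n → ℤ)} {m j k : ℤ}
    (ih : StepClosedBelow S m) (hm : 3 ≤ m) {x y : Fin n → ℤ} (hx : x ∈ S) (hy : y ∈ S)
    (h : HasNorm m (y - x)) (hj : 0 ≤ j) (hjm : j < m) (hk : 0 ≤ k) (hkm : k < m)
    (hmem : x + vecStep m (y - x) j ∈ S) : x + vecStep m (y - x) k ∈ S := by
  by_cases hjk : j = k
  · rwa [← hjk]
  refine ih.of_pair hm hx h hj hjm hk hkm hjk ?_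
  obtain ⟨l, hl0, hl, hle⟩ := h.exists_vecStep_sub hj hjm hk hkm hjk
  have := ih (m - 1) (by omega) _ hmem y hy
    (by simpa [sub_sub] using h.sub_vecStep hj hjm) l hl0 hl
  rwa [← sub_sub, hle, add_assoc] at this

theorem StepClosedBelow.exists_step {n : ℕ} {S : Set (Fin n → ℤ)} (hS : DMCSet S) {m : ℤ}
    (ih : StepClosedBelow S m) (hm : 3 ≤ m) {x y : Fin n → ℤ} (hx : x ∈ S) (hy : y ∈ S)
    (h : HasNorm m (y - x)) : ∃ j, 0 ≤ j ∧ j < m ∧ x + vecStep m (y - x) j ∈ S := by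
  obtain ⟨hu, hw⟩ := hS.avg_mem hx hy h (by omega)
  obtain ⟨hb, i₀, hi₀⟩ := id h
  simp only [Pi.sub_apply] at hb hi₀
  obtain ⟨p, hp | hp⟩ := Int.even_or_odd' m
  · -- the first step towards the upper midpoint
    have hn : HasNorm p (avgUp x y - x) := by
      refine ⟨fun i => ?_, i₀, ?_⟩
      · have := hb i
        simp only [Pi.sub_apply, avgUp_apply]
        omega
      · simp only [Pi.sub_apply, avgUp_apply]
        omega
    refine ⟨1, by omega, by omega, ?_⟩
    convert ih p (by omega) x hx _ hu hn 0 le_rfl (by omega) using 2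
    funext i
    have := hb i
    simp only [Pi.sub_apply, avgUp_apply, vecStep, unitStep]
    split_ifs <;> omega
  · by_cases hpos : ∃ i, y i - x i = m
    · obtain ⟨i₁, hi₁⟩ := hpos
      have hn : HasNorm (p + 1) (avgUp x y - x) := by
        refine ⟨fun i => ?_, i₁, ?_⟩
        · have := hb i
          simp only [Pi.sub_apply, avgUp_apply]
          omega
        · simp only [Pi.sub_apply, avgUp_apply]
          omega
      by_cases hneg : ∃ i, y i - x i = -m
      · have ha := ih (p + 1) (by omega) x hx _ hu hn 0 le_rfl (by omega)
        set a := x + vecStep (p + 1) (avgUp x y - x) 0 with ha_def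
        have hai : ∀ i, a i = x i + (if m ≤ y i - x i then 1 else 0)
            - (if y i - x i ≤ -2 then 1 else 0) := by
          intro i
          have := hb i
          simp only [ha_def, Pi.add_apply, Pi.sub_apply, avgUp_apply, vecStep, unitStep]
          split_ifs <;> omega
        have hna : HasNorm (m - 1) (y - a) := by
          refine ⟨fun i => ?_, i₁, ?_⟩
          · have := hb i
            simp only [Pi.sub_apply, hai]
            split_ifs <;> omega
          · simp only [Pi.sub_apply, hai]
            split_ifs <;> omega
        have hc := ih (m - 1) (by omega) a ha y hy hna 0 le_rfl (by omega)
        refine ⟨1, by omega, by omega,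
          ih.of_pair hm hx h le_rfl (by omega) one_pos.le (by omega) zero_ne_one ?_⟩
        convert hc using 1
        funext i
        have := hb i
        simp only [Pi.add_apply, Pi.sub_apply, vecStep, unitStep, hai]
        split_ifs <;> omega
      · -- the last step towards the upper midpoint
        push Not at hneg
        refine ⟨m - 1, by omega, by omega, ?_⟩
        convert ih (p + 1) (by omega) x hx _ hu hn p (by omega) (by omega) using 2
        funext i
        have := hb i
        have := hneg i
        simp only [Pi.sub_apply, avgUp_apply, vecStep, unitStep]
        split_ifs <;> omega
    · -- the first step towards the lower midpoint
      push Not at hpos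
      have := hpos i₀
      have hn : HasNorm (p + 1) (avgDown x y - x) := by
        refine ⟨fun i => ?_, i₀, ?_⟩
        · have := hb i
          simp only [Pi.sub_apply, avgDown_apply]
          omega
        · simp only [Pi.sub_apply, avgDown_apply]
          omega
      refine ⟨0, le_rfl, by omega, ?_⟩
      convert ih (p + 1) (by omega) x hx _ hw hn 0 le_rfl (by omega) using 2
      funext i
      have := hb i
      have := hpos i
      simp only [Pi.sub_apply, avgDown_apply, vecStep, unitStep]
      split_ifs <;> omega

theorem DMCSet.stepClosedBelow {n : ℕ} {S : Set (Fin n → ℤ)} (hS : DMCSet S) (N : ℕ) :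
    StepClosedBelow S N := by
  induction N with
  | zero => intro l hl x hx y hy h j hj hjl; omega
  | succ N ih =>
    intro m hmN x hx y hy h j hj hjm
    have ih' : StepClosedBelow S m := fun l hl => ih l (by omega)
    obtain rfl | rfl | hm : m = 1 ∨ m = 2 ∨ 3 ≤ m := by omega
    · obtain rfl : j = 0 := by omega
      rwa [add_vecStep_one h]
    · obtain ⟨hu, hw⟩ := hS.avg_mem hx hy h le_rfl
      obtain rfl | rfl : j = 0 ∨ j = 1 := by omega
      · rwa [← avgDown_eq_add_vecStep h]
      · rwa [← avgUp_eq_add_vecStep h]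
    · obtain ⟨k, hk, hkm, hmem⟩ := ih'.exists_step hS hm hx hy h
      exact ih'.of_step hm hx hy h hk hkm hj hjm hmem

/-- A discrete midpoint convex set contains every point reached from one of its points by a unit
step towards another one of its points. -/
theorem DMCSet.add_vecStep_mem {n : ℕ} {S : Set (Fin n → ℤ)} (hS : DMCSet S)
    {x y : Fin n → ℤ} (hx : x ∈ S) (hy : y ∈ S) {m j : ℤ} (h : HasNorm m (y - x)) (hj : 0 ≤ j)
    (hjm : j < m) : x + vecStep m (y - x) j ∈ S :=
  hS.stepClosedBelow (m + 1).toNat m (by omega) x hx y hy h j hj hjm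

theorem WithTop.add_le_add_of_exchange {a b c e s t : WithTop ℝ} (hs : s ≠ ⊤) (ht : t ≠ ⊤)
    (h₁ : s + c ≤ t + b) (h₂ : e + t ≤ a + s) : e + c ≤ a + b := by
  have hst : s + t ≠ ⊤ := by simp [hs, ht]
  refine WithTop.le_of_add_le_add_left hst ?_
  calc s + t + (e + c) = (s + c) + (e + t) := by abel
    _ ≤ (t + b) + (a + s) := add_le_add h₁ h₂
    _ = s + t + (a + b) := by abel

theorem GloballyDMC.locallyDMC {n : ℕ} {f : (Fin n → ℤ) → WithTop ℝ} (hf : GloballyDMC f) :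
    LocallyDMC f := by
  refine ⟨fun x hx y hy hxy => ?_, fun x y hxy => hf x y hxy.ge⟩
  have hlt : f (avgUp x y) + f (avgDown x y) < ⊤ :=
    (hf x y hxy).trans_lt (WithTop.add_lt_top.2 ⟨hx.lt_top, hy.lt_top⟩)
  obtain ⟨h₁, h₂⟩ := WithTop.add_lt_top.1 hlt
  exact ⟨h₁.ne, h₂.ne⟩

theorem LocallyDMC.parallelogram_two {n : ℕ} {f : (Fin n → ℤ) → WithTop ℝ} (hf : LocallyDMC f)
    {x y : Fin n → ℤ} (h : HasNorm 2 (y - x)) {j : ℤ} (hj : 0 ≤ j) (hj2 : j < 2) :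
    f (x + vecStep 2 (y - x) j) + f (y - vecStep 2 (y - x) j) ≤ f x + f y := by
  have hxy : linf (x - y) = 2 := by
    have := h.linf_eq
    rw [linf_sub_comm]
    omega
  have hpair : DMCPair f x y := hf.2 x y hxy
  have hsum : y = x + vecStep 2 (y - x) 0 + vecStep 2 (y - x) 1 := by
    funext i
    have := h.1 i
    simp only [Pi.add_apply, Pi.sub_apply, vecStep, unitStep] at this ⊢
    split_ifs <;> omega
  unfold DMCPair at hpair
  rw [avgUp_eq_add_vecStep h, avgDown_eq_add_vecStep h] at hpair
  obtain rfl | rfl : j = 0 ∨ j = 1 := by omega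
  · have : y - vecStep 2 (y - x) 0 = x + vecStep 2 (y - x) 1 := by
      rw [sub_eq_iff_eq_add, add_right_comm]
      exact hsum
    rwa [this, add_comm (f (x + _))]
  · have : y - vecStep 2 (y - x) 1 = x + vecStep 2 (y - x) 0 := by
      rw [sub_eq_iff_eq_add]
      exact hsum
    rwa [this]

theorem LocallyDMC.parallelogram_of_le {n : ℕ} {f : (Fin n → ℤ) → WithTop ℝ} (hf : LocallyDMC f)
    (N : ℕ) : ∀ m : ℤ, m ≤ N → ∀ x ∈ effDom f, ∀ y ∈ effDom f, HasNorm m (y - x) →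
      ∀ j, 0 ≤ j → j < m →
        f (x + vecStep m (y - x) j) + f (y - vecStep m (y - x) j) ≤ f x + f y := by
  induction N with
  | zero => intro m hm x hx y hy h j hj hjm; omega
  | succ N ih =>
    intro m hmN x hx y hy h j hj hjm
    obtain rfl | rfl | hm : m = 1 ∨ m = 2 ∨ 3 ≤ m := by omega
    · obtain rfl : j = 0 := by omega
      have hx' : y - vecStep 1 (y - x) 0 = x := by
        rw [sub_eq_iff_eq_add, add_vecStep_one h]
      rw [hx', add_vecStep_one h, add_comm]
    · exact hf.parallelogram_two h hj hjm
    · obtain ⟨k, hk, hkm, hkj⟩ : ∃ k, 0 ≤ k ∧ k < m ∧ k ≠ j := by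
        by_cases hj0 : j = 0
        · exact ⟨1, by omega, by omega, by omega⟩
        · exact ⟨0, by omega, by omega, by omega⟩
      have hxk := hf.1.add_vecStep_mem hx hy h hk hkm
      have hnorm : HasNorm (m - 1) (y - (x + vecStep m (y - x) k)) := by
        simpa [sub_sub] using h.sub_vecStep hk hkm
      obtain ⟨l, hl, hlm, hle⟩ := h.exists_vecStep_sub hk hkm hj hjm hkj
      rw [sub_sub] at hle
      have hxkj := hf.1.add_vecStep_mem hxk hy hnorm hl hlm
      have h₁ := ih (m - 1) (by omega) _ hxk y hy hnorm l hl hlm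
      rw [hle] at h₁ hxkj
      obtain ⟨l', hl', hlm', hle'⟩ := h.exists_vecStep_pair hk hkm hj hjm hkj
      have h₂ := hf.parallelogram_two (x := x) (y := x + vecStep m (y - x) k + vecStep m (y - x) j)
        (by simpa [add_assoc] using h.vecStep_add_vecStep hk hkm hj hjm) hl' hlm'
      rw [add_assoc x, add_sub_cancel_left, hle', ← add_assoc x, add_sub_cancel_right] at h₂
      exact WithTop.add_le_add_of_exchange hxkj hxk h₁ h₂

/-- The parallelogram inequality for a single unit step. -/
theorem LocallyDMC.parallelogram {n : ℕ} {f : (Fin n → ℤ) → WithTop ℝ} (hf : LocallyDMC f)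
    {x y : Fin n → ℤ} (hx : x ∈ effDom f) (hy : y ∈ effDom f) {m j : ℤ}
    (h : HasNorm m (y - x)) (hj : 0 ≤ j) (hjm : j < m) :
    f (x + vecStep m (y - x) j) + f (y - vecStep m (y - x) j) ≤ f x + f y :=
  hf.parallelogram_of_le m.toNat m (by omega) x hx y hy h j hj hjm

/-- The decomposition of `v` into `m` unit steps contains `b` consecutive copies of `d`. -/
def HasCopies {n : ℕ} (m : ℤ) (v d : Fin n → ℤ) (b : ℕ) : Prop :=
  HasNorm m v ∧ ∃ j, 0 ≤ j ∧ j + b ≤ m ∧ ∀ t, j ≤ t → t < j + b → vecStep m v t = d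

theorem HasCopies.sub {n : ℕ} {m : ℤ} {v d : Fin n → ℤ} {b : ℕ} (h : HasCopies m v d (b + 1)) :
    HasCopies (m - 1) (v - d) d b := by
  obtain ⟨hv, j, hj, hjm, hd⟩ := h
  push_cast at hjm hd
  obtain rfl := hd j le_rfl (by omega)
  refine ⟨hv.sub_vecStep hj (by omega), j, hj, by omega, fun t hjt ht => ?_⟩
  refine Eq.trans (funext fun i => ?_) (hd (t + 1) (by omega) (by omega))
  exact unitStep_sub_of_le (hv.1 i) hj hjt (by omega)

theorem HasCopies.sub_smul {n : ℕ} {v d : Fin n → ℤ} {b : ℕ} (c : ℕ) {m : ℤ}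
    (h : HasCopies m v d (b + c)) : HasCopies (m - c) (v - (c : ℤ) • d) d b := by
  induction c generalizing b with
  | zero => simpa using h
  | succ c ih =>
    have := (ih (b := b + 1) (by rwa [add_assoc, add_comm 1])).sub
    convert this using 1
    · push_cast; ring
    · push_cast; module

theorem LocallyDMC.parallelogram_copy {n : ℕ} {f : (Fin n → ℤ) → WithTop ℝ} (hf : LocallyDMC f)
    {x y d : Fin n → ℤ} (hx : x ∈ effDom f) (hy : y ∈ effDom f) {m : ℤ} {b : ℕ}
    (h : HasCopies m (y - x) d (b + 1)) : f (x + d) + f (y - d) ≤ f x + f y := by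
  obtain ⟨hv, j, hj, hjm, hd⟩ := h
  push_cast at hjm hd
  obtain rfl := hd j le_rfl (by omega)
  exact hf.parallelogram hx hy hv hj (by omega)

theorem effDom_of_add_le {n : ℕ} {f : (Fin n → ℤ) → WithTop ℝ} {x y z w : Fin n → ℤ}
    (hx : x ∈ effDom f) (hy : y ∈ effDom f) (h : f z + f w ≤ f x + f y) :
    z ∈ effDom f ∧ w ∈ effDom f := by
  have hlt := h.trans_lt (WithTop.add_lt_top.2 ⟨hx.lt_top, hy.lt_top⟩)
  obtain ⟨h₁, h₂⟩ := WithTop.add_lt_top.1 hlt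
  exact ⟨h₁.ne, h₂.ne⟩

/-- The parallelogram inequality for a multiple of a repeated unit step. -/
theorem LocallyDMC.parallelogram_copies {n : ℕ} {f : (Fin n → ℤ) → WithTop ℝ}
    (hf : LocallyDMC f) {d y : Fin n → ℤ} (hy : y ∈ effDom f) (b : ℕ) :
    ∀ {x : Fin n → ℤ} {m : ℤ}, x ∈ effDom f → HasCopies m (y - x) d b →
      f (x + (b : ℤ) • d) + f (y - (b : ℤ) • d) ≤ f x + f y := by
  induction b with
  | zero => intro x m hx h; simp
  | succ b ih =>
    intro x m hx h
    have hxd : x + d ∈ effDom f := (effDom_of_add_le hx hy (hf.parallelogram_copy hx hy h)).1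
    have h₁ := ih hxd (m := m - 1) (by rw [← sub_sub]; exact h.sub)
    have hyb : y - (b : ℤ) • d ∈ effDom f := (effDom_of_add_le hxd hy h₁).2
    have hcopy := HasCopies.sub_smul (b := 0 + 1) b (by rwa [zero_add, add_comm 1])
    have h₂ := hf.parallelogram_copy hx hyb (m := m - b) (b := 0)
      (by rwa [sub_right_comm])
    have e₁ : x + ((b + 1 : ℕ) : ℤ) • d = x + d + (b : ℤ) • d := by push_cast; module
    have e₂ : y - ((b + 1 : ℕ) : ℤ) • d = y - (b : ℤ) • d - d := by push_cast; module
    rw [e₁, e₂, add_comm (f (x + d + _))]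
    rw [add_comm (f (x + d + _))] at h₁
    rw [add_comm (f (x + d))] at h₂
    exact WithTop.add_le_add_of_exchange hyb hxd h₁ h₂

/-- If `m > n (α - 1)`, then some unit step is repeated `α` times. -/
theorem HasNorm.exists_hasCopies {n : ℕ} {m : ℤ} {v : Fin n → ℤ} (h : HasNorm m v) {α : ℕ}
    (hα : 0 < α) (hm : ((n * (α - 1) : ℕ) : ℤ) < m) : ∃ d, HasCopies m v d α := by
  set Φ : ℤ → ℤ := fun j => ∑ i, unitStep m (v i) j with hΦ
  have key : ∃ j : ℤ, 0 ≤ j ∧ j + α ≤ m ∧ Φ (j + (α - 1 : ℕ)) ≤ Φ j := by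
    by_contra! hcon
    have hgrow : ∀ r : ℕ, r ≤ n → Φ 0 + r ≤ Φ ((r * (α - 1) : ℕ) : ℤ) := by
      intro r
      induction r with
      | zero => intro _; simp
      | succ r ih =>
        intro hr
        have hle : (r + 1) * (α - 1) ≤ n * (α - 1) := Nat.mul_le_mul_right _ hr
        rw [add_mul, one_mul] at hle ⊢
        have := hcon ((r * (α - 1) : ℕ) : ℤ) (by positivity) (by omega)
        have := ih (by omega)
        push_cast at *
        linarith
    have hn := hgrow n le_rfl
    obtain ⟨hb, i₀, hi₀⟩ := h
    have hlt : Φ ((n * (α - 1) : ℕ) : ℤ) < ∑ i, (unitStep m (v i) 0 + 1) := by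
      refine Finset.sum_lt_sum (fun i _ => unitStep_le_add_one le_rfl hm)
        ⟨i₀, Finset.mem_univ _, ?_⟩
      rw [unitStep_eq_of_extreme (j := 0) hi₀ le_rfl (by omega) (by positivity) hm]
      omega
    simp only [Finset.sum_add_distrib, Finset.sum_const, Finset.card_univ, Fintype.card_fin,
      mul_one, nsmul_eq_mul] at hlt
    simp only [hΦ] at hn hlt
    omega
  obtain ⟨j, hj, hjm, hle⟩ := key
  refine ⟨vecStep m v j, h, j, hj, hjm, fun t hjt ht => funext fun i => ?_⟩
  have hend : unitStep m (v i) j = unitStep m (v i) (j + (α - 1 : ℕ)) := by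
    have hmono : ∀ i ∈ Finset.univ, unitStep m (v i) j ≤ unitStep m (v i) (j + (α - 1 : ℕ)) :=
      fun i _ => unitStep_mono (by omega)
    exact (Finset.sum_eq_sum_iff_of_le hmono).1
      (le_antisymm (Finset.sum_le_sum hmono) hle) i (Finset.mem_univ i)
  have h₁ : unitStep m (v i) j ≤ unitStep m (v i) t := unitStep_mono hjt
  have h₂ : unitStep m (v i) t ≤ unitStep m (v i) (j + (α - 1 : ℕ)) := unitStep_mono (by omega)
  simp only [vecStep]
  omega

theorem LocallyDMC.exists_le_near {n : ℕ} {f : (Fin n → ℤ) → WithTop ℝ} (hf : LocallyDMC f)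
    {α : ℕ} (hα : 0 < α) {x : Fin n → ℤ} (hx : x ∈ effDom f)
    (hloc : ∀ d : Fin n → ℤ, (∀ i, d i = -1 ∨ d i = 0 ∨ d i = 1) → f x ≤ f (x + (α : ℤ) • d))
    (N : ℕ) : ∀ y ∈ effDom f, linf (y - x) ≤ N →
      ∃ z, linf (x - z) ≤ n * (α - 1) ∧ f z ≤ f y := by
  induction N with
  | zero => exact fun y _ hN => ⟨y, by rw [linf_sub_comm]; omega, le_rfl⟩
  | succ N ih =>
    intro y hy hN
    by_cases hle : linf (y - x) ≤ n * (α - 1)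
    · exact ⟨y, by rwa [linf_sub_comm], le_rfl⟩
    obtain ⟨d, hd⟩ := (hasNorm_linf (v := y - x) (by omega)).exists_hasCopies hα
      (by exact_mod_cast not_le.1 hle)
    have hpar := hf.parallelogram_copies hy α hx hd
    have hnorm := (HasCopies.sub_smul (b := 0) α (by rwa [zero_add])).1.linf_eq
    rw [sub_right_comm] at hnorm
    have hstep : f x ≤ f (x + (α : ℤ) • d) := by
      obtain ⟨-, j, -, -, hdj⟩ := hd
      refine hloc d fun i => ?_
      rw [← hdj j le_rfl (by omega)]
      exact unitStep_cases _ _ _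
    have hyd : f (y - (α : ℤ) • d) ≤ f y :=
      WithTop.le_of_add_le_add_left hx ((add_le_add_left hstep _).trans hpar)
    obtain ⟨z, hz, hzy⟩ := ih _ (effDom_of_add_le hx hy hpar).2 (by omega)
    exact ⟨z, hz, hzy.trans hyd⟩

theorem finite_setOf_linf_sub_le {n : ℕ} (x : Fin n → ℤ) (N : ℕ) :
    {z : Fin n → ℤ | linf (x - z) ≤ N}.Finite := by
  refine (Set.finite_Icc (fun i => x i - N) (fun i => x i + N)).subset fun z hz => ?_
  have hz' := (linf_le_iff _ _).1 hz
  simp only [Pi.sub_apply] at hz'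
  exact ⟨fun i => by have := hz' i; dsimp only; omega, fun i => by have := hz' i; dsimp only; omega⟩

/-- Proximity theorem: if `x^α ∈ dom f` is an `α`-local minimizer of a
(globally or locally) discrete midpoint convex function `f`, then there is a
global minimizer `x*` of `f` with `‖x^α − x*‖∞ ≤ n(α − 1)`. -/
theorem dmc_proximity {n : ℕ} (f : (Fin n → ℤ) → WithTop ℝ)
    (hdmc : GloballyDMC f ∨ LocallyDMC f)
    (α : ℕ) (hα : 0 < α) (xα : Fin n → ℤ) (hxα : xα ∈ effDom f)
    (hloc : ∀ d : Fin n → ℤ, (∀ i, d i = -1 ∨ d i = 0 ∨ d i = 1) →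
      f xα ≤ f (xα + (α : ℤ) • d)) :
    ∃ xstar : Fin n → ℤ, (∀ z : Fin n → ℤ, f xstar ≤ f z) ∧
      linf (xα - xstar) ≤ n * (α - 1) := by
  have hf : LocallyDMC f := hdmc.elim GloballyDMC.locallyDMC id
  obtain ⟨z, hz, hmin⟩ := Set.exists_min_image _ f (finite_setOf_linf_sub_le xα (n * (α - 1)))
    ⟨xα, by simp [linf]⟩
  refine ⟨z, fun y => ?_, hz⟩
  by_cases hy : y ∈ effDom f
  · obtain ⟨w, hw, hwy⟩ := hf.exists_le_near hα hxα hloc (linf (y - xα)) y hy le_rfl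
    exact (hmin w hw).trans hwy
  · rw [show f y = ⊤ from not_not.1 hy]
    exact le_top
end

section
/- Let α be a positive integer, let y ∈ ℤⁿ with m := ‖y‖∞ = n(α − 1) + 1, and define A_k = {i : y_i ≥ m+1−k} and B_k = {i : y_i ≤ −k} for k = 1,…,m. Then there exists k₀ ∈ {1,…, m − α + 1} such that (A_{k₀}, B_{k₀}) = (A_{k₀+j}, B_{k₀+j}) for all j = 1,…, α − 1. -/
theorem natAbs_le_linf {n : ℕ} (z : Fin n → ℤ) (i : Fin n) : (z i).natAbs ≤ linf z :=
  Finset.le_sup (f := fun i => (z i).natAbs) (Finset.mem_univ i)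

theorem exists_natAbs_eq_linf {n : ℕ} (hn : 0 < n) (z : Fin n → ℤ) :
    ∃ i, (z i).natAbs = linf z := by
  obtain ⟨i, -, hi⟩ := Finset.exists_mem_eq_sup Finset.univ ⟨⟨0, hn⟩, Finset.mem_univ _⟩
    fun i => (z i).natAbs
  exact ⟨i, hi.symm⟩

/-- Fewer than `n` points cannot meet all `n` consecutive blocks `(b * d, (b + 1) * d]`, `b < n`. -/
theorem exists_block_avoiding {ι : Type*} (s : Finset ι) (c : ι → ℕ) (d : ℕ) {n : ℕ}
    (hs : s.card < n) :
    ∃ b < n, ∀ i ∈ s, c i ≤ b * d ∨ (b + 1) * d < c i := by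
  have hcard : (s.image fun i => (c i - 1) / d).card < (Finset.range n).card := by
    rw [Finset.card_range]
    exact Finset.card_image_le.trans_lt hs
  obtain ⟨b, hb, hbs⟩ := Finset.exists_mem_notMem_of_card_lt_card hcard
  refine ⟨b, Finset.mem_range.mp hb, fun i hi => ?_⟩
  by_contra! h
  refine hbs (Finset.mem_image.mpr ⟨i, hi, ?_⟩)
  exact Nat.div_eq_of_lt_le (by omega) (by omega)

/-- For a positive integer `α` and `y ∈ ℤⁿ` with `m = ‖y‖∞ = n(α−1)+1`, in
the canonical decomposition with `A_k = {i : y_i ≥ m+1−k}` and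
`B_k = {i : y_i ≤ −k}`, there is an index `k₀ ∈ {1,…,m−α+1}` with
`(A_{k₀}, B_{k₀}) = (A_{k₀+j}, B_{k₀+j})` for `j = 1,…,α−1`. -/
theorem exists_constant_run {n : ℕ} (hn : 0 < n) (α : ℕ) (hα : 0 < α)
    (y : Fin n → ℤ) (m : ℕ) (hm : m = linf y) (hmval : m = n * (α - 1) + 1)
    (A B : ℕ → Finset (Fin n))
    (hA : ∀ k, A k = Finset.univ.filter fun i => (m : ℤ) + 1 - (k : ℤ) ≤ y i)
    (hB : ∀ k, B k = Finset.univ.filter fun i => y i ≤ -(k : ℤ)) :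
    ∃ k₀ : ℕ, 1 ≤ k₀ ∧ k₀ ≤ m - α + 1 ∧
      ∀ j : ℕ, 1 ≤ j → j ≤ α - 1 → A (k₀ + j) = A k₀ ∧ B (k₀ + j) = B k₀ := by
  obtain ⟨i₀, hi₀⟩ := exists_natAbs_eq_linf hn y
  -- the unique `k` at which `i` can enter `A (k + 1)` or leave `B k`
  let c : Fin n → ℕ := fun i => if 0 < y i then m - (y i).natAbs else (y i).natAbs
  obtain ⟨b, hbn, hb⟩ := exists_block_avoiding (Finset.univ.erase i₀) c (α - 1) (n := n) (by
    rw [Finset.card_erase_of_mem (Finset.mem_univ _), Finset.card_univ, Fintype.card_fin]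
    omega)
  have hbm : (b + 1) * (α - 1) + 1 ≤ m := by
    rw [hmval]
    gcongr
    exact hbn
  have hc : ∀ i, c i ≤ b * (α - 1) ∨ (b + 1) * (α - 1) < c i := by
    intro i
    by_cases hi : i = i₀
    · subst hi
      simp only [c]
      split_ifs <;> omega
    · exact hb i (Finset.mem_erase.mpr ⟨hi, Finset.mem_univ i⟩)
  rw [add_mul, one_mul] at hbm hc
  refine ⟨b * (α - 1) + 1, by omega, by omega, fun j hj hjα => ?_⟩
  simp only [hA, hB]
  constructor <;>
  · refine Finset.filter_congr fun i _ => ?_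
    have hle := natAbs_le_linf y i
    have hci := hc i
    simp only [c] at hci
    generalize b * (α - 1) = t at *
    split_ifs at hci <;> omega
end

section
/- For n = 2, let Q be a 2×2 real symmetric matrix with entries q₁₁, q₁₂ = q₂₁, q₂₂, and let f : ℤ² → ℝ be f(x) = xᵀQx. Then f is locally discrete midpoint convex if and only if q₁₁ ≥ |q₁₂| and q₂₂ ≥ |q₁₂|; and f is globally discrete midpoint convex if and only if q₁₁ ≥ |q₁₂|, q₂₂ ≥ |q₁₂|, and q₁₁ + q₂₂ ≥ (5/2)·q₁₂. -/
open Matrix Classical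

/-- The real cast of an integer vector. -/
def castVec {n : ℕ} (z : Fin n → ℤ) : Fin n → ℝ := fun i => (z i : ℝ)

/-- The quadratic function `f(x) = xᵀ Q x` on `ℤⁿ`. -/
def quadFn {n : ℕ} (Q : Matrix (Fin n) (Fin n) ℝ) (x : Fin n → ℤ) : ℝ :=
  castVec x ⬝ᵥ Q.mulVec (castVec x)

/-- The real-valued function `f` satisfies discrete midpoint convexity for the
pair `(x, y)`. -/
def DMCPairR {n : ℕ} (f : (Fin n → ℤ) → ℝ) (x y : Fin n → ℤ) : Prop :=
  f (avgUp x y) + f (avgDown x y) ≤ f x + f y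

/-- A real-valued `f` is globally discrete midpoint convex (its effective
domain is all of `ℤⁿ`, which is trivially a discrete midpoint convex set). -/
def GloballyDMCR {n : ℕ} (f : (Fin n → ℤ) → ℝ) : Prop :=
  ∀ x y : Fin n → ℤ, 2 ≤ linf (x - y) → DMCPairR f x y

/-- A real-valued `f` is locally discrete midpoint convex (its effective
domain is all of `ℤⁿ`, which is trivially a discrete midpoint convex set). -/
def LocallyDMCR {n : ℕ} (f : (Fin n → ℤ) → ℝ) : Prop :=
  ∀ x y : Fin n → ℤ, linf (x - y) = 2 → DMCPairR f x y

/-- The characteristic real vector of the set of indices where `z` is odd. -/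
noncomputable def oddChar {n : ℕ} (z : Fin n → ℤ) : Fin n → ℝ :=
  fun i => if Odd (z i) then 1 else 0

/-- Rounding half of an integer up. -/
lemma ceil_intCast_div_two (m : ℤ) : ⌈(m : ℚ) / 2⌉ = (m + 1) / 2 := by
  rw [Int.ceil_eq_iff]
  obtain ⟨k, rfl | rfl⟩ := Int.even_or_odd' m
  · rw [show (2 * k + 1) / 2 = k by omega]
    push_cast
    constructor <;> linarith
  · rw [show (2 * k + 1 + 1) / 2 = k + 1 by omega]
    push_cast
    constructor <;> linarith

/-- Rounding half of an integer down. -/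
lemma floor_intCast_div_two (m : ℤ) : ⌊(m : ℚ) / 2⌋ = m / 2 := by
  exact_mod_cast Rat.floor_intCast_div_natCast m 2

lemma avgUp_add_avgDown {n : ℕ} (x y : Fin n → ℤ) (i : Fin n) :
    avgUp x y i + avgDown x y i = x i + y i := by
  simp only [avgUp, avgDown, ← Int.cast_add, ceil_intCast_div_two, floor_intCast_div_two]
  omega

lemma avgUp_sub_avgDown {n : ℕ} (x y : Fin n → ℤ) (i : Fin n) :
    avgUp x y i - avgDown x y i = (x i - y i) % 2 := by
  simp only [avgUp, avgDown, ← Int.cast_add, ceil_intCast_div_two, floor_intCast_div_two]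
  omega

lemma quadFn_fin_two (Q : Matrix (Fin 2) (Fin 2) ℝ) (hQ : Q 1 0 = Q 0 1) (x : Fin 2 → ℤ) :
    quadFn Q x =
      Q 0 0 * (x 0 : ℝ) ^ 2 + 2 * Q 0 1 * ((x 0 : ℝ) * x 1) + Q 1 1 * (x 1 : ℝ) ^ 2 := by
  simp only [quadFn, castVec, dotProduct, Matrix.mulVec, Fin.sum_univ_two, hQ]
  ring

lemma linf_fin_two (z : Fin 2 → ℤ) : linf z = max (z 0).natAbs (z 1).natAbs := by
  simp [linf, Fin.univ_succ]

/-- Discrete midpoint convexity of a binary quadratic form for a pair depends only on the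
difference of the pair and on its parity vector. -/
lemma dmcPairR_quadFn_iff (Q : Matrix (Fin 2) (Fin 2) ℝ) (hQ : Q 1 0 = Q 0 1)
    (x y : Fin 2 → ℤ) :
    DMCPairR (quadFn Q) x y ↔
      0 ≤ Q 0 0 * (((x 0 - y 0) ^ 2 - (x 0 - y 0) % 2 : ℤ) : ℝ) +
        2 * Q 0 1 * (((x 0 - y 0) * (x 1 - y 1) -
          (x 0 - y 0) % 2 * ((x 1 - y 1) % 2) : ℤ) : ℝ) +
        Q 1 1 * (((x 1 - y 1) ^ 2 - (x 1 - y 1) % 2 : ℤ) : ℝ) := by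
  have hsq (m : ℤ) : m % 2 = (m % 2) ^ 2 := by
    obtain h | h := Int.emod_two_eq_zero_or_one m <;> simp [h]
  rw [DMCPairR]
  simp only [quadFn_fin_two Q hQ]
  rw [show (x 0 - y 0) ^ 2 - (x 0 - y 0) % 2 = (x 0 - y 0) ^ 2 - ((x 0 - y 0) % 2) ^ 2 by
      rw [← hsq],
    show (x 1 - y 1) ^ 2 - (x 1 - y 1) % 2 = (x 1 - y 1) ^ 2 - ((x 1 - y 1) % 2) ^ 2 by
      rw [← hsq],
    ← avgUp_sub_avgDown, ← avgUp_sub_avgDown]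
  have half (i : Fin 2) : (y i : ℝ) = avgUp x y i + avgDown x y i - x i := by
    have h : (avgUp x y i : ℝ) + avgDown x y i = x i + y i := by
      exact_mod_cast avgUp_add_avgDown x y i
    linarith
  push_cast
  generalize hu : avgUp x y = u at *
  generalize hv : avgDown x y = v at *
  rw [half 0, half 1, ← sub_nonneg,
    ← mul_nonneg_iff_of_pos_left (show (0 : ℝ) < 2 by norm_num)]
  apply iff_of_eq
  congr 1
  ring

lemma nonneg_of_abs_le {a b c A B C : ℝ} (ha : |b| ≤ a) (hc : |b| ≤ c) (hA : 0 ≤ A)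
    (hC : 0 ≤ C) (hB : 2 * B ≤ A + C) (hB' : -(2 * B) ≤ A + C) :
    0 ≤ a * A + 2 * b * B + c * C := by
  have hBabs : |2 * B| ≤ A + C := abs_le.2 ⟨by linarith, hB⟩
  have hprod : -(|b| * (A + C)) ≤ b * (2 * B) :=
    (neg_le_neg (mul_le_mul_of_nonneg_left hBabs (abs_nonneg b))).trans
      (abs_mul b (2 * B) ▸ neg_abs_le (b * (2 * B)))
  linarith [mul_le_mul_of_nonneg_right ha hA, mul_le_mul_of_nonneg_right hc hC]

lemma emod_two_le_sq (m : ℤ) : m % 2 ≤ m ^ 2 := by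
  obtain h | h := Int.emod_two_eq_zero_or_one m
  · rw [h]; positivity
  · have : m ≠ 0 := by rintro rfl; simp at h
    have : 0 < m ^ 2 := by positivity
    omega

/-- The inequality for a difference `(p, q)` that is not an odd multiple of `(1, -1)`. -/
lemma quad_nonneg_of_abs_le {a b c : ℝ} (ha : |b| ≤ a) (hc : |b| ≤ c) (p q : ℤ)
    (h : p % 2 = 0 ∨ p + q ≠ 0) :
    0 ≤ a * ((p ^ 2 - p % 2 : ℤ) : ℝ) + 2 * b * ((p * q - p % 2 * (q % 2) : ℤ) : ℝ) +
      c * ((q ^ 2 - q % 2 : ℤ) : ℝ) := by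
  have hp := emod_two_le_sq p
  have hq := emod_two_le_sq q
  have hadd : (p + q) % 2 ≤ p ^ 2 + 2 * (p * q) + q ^ 2 :=
    (emod_two_le_sq (p + q)).trans_eq (by ring)
  have hsub : (p - q) % 2 ≤ p ^ 2 - 2 * (p * q) + q ^ 2 :=
    (emod_two_le_sq (p - q)).trans_eq (by ring)
  have hupper : 2 * (p * q - p % 2 * (q % 2)) ≤ p ^ 2 - p % 2 + (q ^ 2 - q % 2) := by
    obtain hp2 | hp2 := Int.emod_two_eq_zero_or_one p <;>
    obtain hq2 | hq2 := Int.emod_two_eq_zero_or_one q <;>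
    rw [Int.sub_emod, hp2, hq2] at hsub <;> rw [hp2, hq2] <;> norm_num at hsub ⊢ <;> linarith
  have hlower : -(2 * (p * q - p % 2 * (q % 2))) ≤ p ^ 2 - p % 2 + (q ^ 2 - q % 2) := by
    obtain hp2 | hp2 := Int.emod_two_eq_zero_or_one p <;>
    obtain hq2 | hq2 := Int.emod_two_eq_zero_or_one q
    on_goal 4 =>
      have hsum : p + q ≠ 0 := by omega
      obtain ⟨k, hk⟩ : ∃ k, p + q = 2 * k := ⟨(p + q) / 2, by omega⟩
      have hk0 : k ≠ 0 := by omega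
      have hksq : 0 < k ^ 2 := by positivity
      have hsq : (p + q) ^ 2 = 4 * k ^ 2 := by rw [hk]; ring
      rw [hp2, hq2]
      linarith
    all_goals
      rw [Int.add_emod, hp2, hq2] at hadd
      rw [hp2, hq2]
      norm_num at hadd ⊢
      linarith
  apply nonneg_of_abs_le ha hc
  · exact_mod_cast sub_nonneg.2 hp
  · exact_mod_cast sub_nonneg.2 hq
  · exact_mod_cast hupper
  · exact_mod_cast hlower

/-- The inequality for a difference `(p, -p)` with `p` odd and `3 ≤ |p|`. -/
lemma quad_nonneg_antidiagonal {a b c : ℝ} (ha : |b| ≤ a) (hc : |b| ≤ c)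
    (hac : 5 / 2 * b ≤ a + c) (p q : ℤ) (hp : p % 2 = 1) (hpq : p + q = 0)
    (hp2 : 2 ≤ p.natAbs) :
    0 ≤ a * ((p ^ 2 - p % 2 : ℤ) : ℝ) + 2 * b * ((p * q - p % 2 * (q % 2) : ℤ) : ℝ) +
      c * ((q ^ 2 - q % 2 : ℤ) : ℝ) := by
  obtain rfl : q = -p := by omega
  have hq : -p % 2 = 1 := by omega
  have hsq : (9 : ℝ) ≤ (p : ℝ) ^ 2 := by
    have : |(3 : ℤ)| ≤ |p| := by
      rw [Int.abs_eq_natAbs p, abs_of_pos three_pos]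
      omega
    exact_mod_cast sq_le_sq.2 this
  rw [hp, hq]
  push_cast
  have hsum : 0 ≤ (a + c - 5 / 2 * b) * ((p : ℝ) ^ 2 - 1) :=
    mul_nonneg (by linarith) (by linarith)
  obtain hb | hb := le_total 0 b
  · linarith [mul_nonneg hb (show 0 ≤ (p : ℝ) ^ 2 - 9 by linarith)]
  · have ha0 := (abs_nonneg b).trans ha
    have hc0 := (abs_nonneg b).trans hc
    nlinarith [mul_nonneg (add_nonneg ha0 hc0) (show 0 ≤ (p : ℝ) ^ 2 - 1 by linarith),
      mul_nonneg (neg_nonneg.2 hb) (show 0 ≤ (p : ℝ) ^ 2 + 1 by linarith)]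

lemma abs_le_of_locallyDMCR {Q : Matrix (Fin 2) (Fin 2) ℝ} (hQ : Q 1 0 = Q 0 1)
    (h : LocallyDMCR (quadFn Q)) : |Q 0 1| ≤ Q 0 0 ∧ |Q 0 1| ≤ Q 1 1 := by
  have hpair (p q : ℤ) (hpq : max p.natAbs q.natAbs = 2) :=
    (dmcPairR_quadFn_iff Q hQ ![p, q] 0).1 (h _ _ (by simpa [linf_fin_two] using hpq))
  have h₁ := hpair 2 1 rfl
  have h₂ := hpair 2 (-1) rfl
  have h₃ := hpair 1 2 rfl
  have h₄ := hpair (-1) 2 rfl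
  norm_num at h₁ h₂ h₃ h₄
  exact ⟨abs_le.2 ⟨by linarith, by linarith⟩, abs_le.2 ⟨by linarith, by linarith⟩⟩

lemma GloballyDMCR.locallyDMCR {n : ℕ} {f : (Fin n → ℤ) → ℝ} (h : GloballyDMCR f) :
    LocallyDMCR f :=
  fun x y hxy => h x y hxy.ge

/-- For `n = 2` and a symmetric matrix `Q`, the quadratic `f(x) = xᵀQx` is
locally discrete midpoint convex iff `q₁₁ ≥ |q₁₂|` and `q₂₂ ≥ |q₁₂|`, and
globally discrete midpoint convex iff in addition `q₁₁ + q₂₂ ≥ (5/2)q₁₂`. -/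
theorem quad_dmc_dim2 (Q : Matrix (Fin 2) (Fin 2) ℝ) (hQ : Q 1 0 = Q 0 1) :
    (LocallyDMCR (quadFn Q) ↔ |Q 0 1| ≤ Q 0 0 ∧ |Q 0 1| ≤ Q 1 1) ∧
    (GloballyDMCR (quadFn Q) ↔
      |Q 0 1| ≤ Q 0 0 ∧ |Q 0 1| ≤ Q 1 1 ∧ (5 / 2) * Q 0 1 ≤ Q 0 0 + Q 1 1) := by
  refine ⟨⟨abs_le_of_locallyDMCR hQ, fun ⟨ha, hc⟩ x y hxy => ?_⟩,
    fun h => ?_, fun ⟨ha, hc, hac⟩ x y hxy => ?_⟩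
  · rw [dmcPairR_quadFn_iff Q hQ]
    rw [linf_fin_two, Pi.sub_apply, Pi.sub_apply] at hxy
    exact quad_nonneg_of_abs_le ha hc _ _ (by omega)
  · obtain ⟨ha, hc⟩ := abs_le_of_locallyDMCR hQ h.locallyDMCR
    have h₃ := (dmcPairR_quadFn_iff Q hQ ![3, -3] 0).1 (h _ _ (by simp [linf_fin_two]))
    norm_num at h₃
    exact ⟨ha, hc, by linarith⟩
  · rw [dmcPairR_quadFn_iff Q hQ]
    rw [linf_fin_two, Pi.sub_apply, Pi.sub_apply] at hxy
    by_cases hpq : (x 0 - y 0) % 2 = 0 ∨ x 0 - y 0 + (x 1 - y 1) ≠ 0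
    · exact quad_nonneg_of_abs_le ha hc _ _ hpq
    · exact quad_nonneg_antidiagonal ha hc hac _ _ (by omega) (by omega) (by omega)
end
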